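/- Let L : ℕ → ℝ with L_n ≥ 1 for all n, Σ_{n=0}^∞ 1/L_n < ∞, B_N = Σ_{n=0}^N L_n and R_N = Σ_{n=N}^∞ 1/L_n. Assume: (i) B_{2N} ≤ c·B_N for all N > N₀ (some c > 1); (ii) B_N ∼ N^{d_H} with 2 ≤ d_H < 4; (iii) R_N ∼ N^{2−d_H+ρ} for some real ρ; (iv) η is a sequence of functions, each positive, differentiable, nonincreasing and convex on (0,1), with lim_{x→0+} η_n(x) = R_n and 1/L_n ≤ η_n(x) ≤ x^{−1/2}, satisfying the recursion η_n(x) = (η_{n+1}(x) + 1/L_n)/(1 + x·L_n·η_{n+1}(x)) for all n and x ∈ (0,1); (v) for every sufficiently large k there exists x_k ∈ (0,1) with x_k·F_{k−1}(x_k) = 1 and x_k → 0 as k → ∞. Then if the spectral dimension exists, i.e. |η_0′(x)| ∼ x^{−2+d_s/2} as x → 0 for some real d_s, it equals d_s = 2·d_H/(2+ρ). -/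

import Mathlib

/-- `X_N ∼ N^a`: there are constants `0 < c₁ ≤ c₂`, `c₁' ≤ c₂'` and `N₀` with
`c₁ N^a (log N)^{c₁'} ≤ X_N ≤ c₂ N^a (log N)^{c₂'}` for all `N > N₀`. -/
def NAsymp (X : ℕ → ℝ) (a : ℝ) : Prop :=
  ∃ c₁ c₂ c₁' c₂' : ℝ, ∃ N₀ : ℕ, 0 < c₁ ∧ c₁ ≤ c₂ ∧ c₁' ≤ c₂' ∧
    ∀ N : ℕ, N₀ < N →
      c₁ * (N:ℝ)^a * (Real.log N)^c₁' ≤ X N ∧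
      X N ≤ c₂ * (N:ℝ)^a * (Real.log N)^c₂'

/-- `f(x) ∼ x^a` as `x → 0`: there are constants `0 < c₁ ≤ c₂`, `c₁' ≤ c₂'` and
`x₀ ∈ (0,1)` with `c₁ x^a (log(1/x))^{c₁'} ≤ f(x) ≤ c₂ x^a (log(1/x))^{c₂'}`
for all `0 < x < x₀`. -/
def ZeroAsymp (f : ℝ → ℝ) (a : ℝ) : Prop :=
  ∃ c₁ c₂ c₁' c₂' x₀ : ℝ, 0 < c₁ ∧ c₁ ≤ c₂ ∧ c₁' ≤ c₂' ∧ 0 < x₀ ∧ x₀ < 1 ∧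
    ∀ x : ℝ, 0 < x → x < x₀ →
      c₁ * x^a * (Real.log (1/x))^c₁' ≤ f x ∧
      f x ≤ c₂ * x^a * (Real.log (1/x))^c₂'

/-!
Write `p_n = x L_n η_{n+1}(x)`. The recursion `η_n (1 + p_n) = η_{n+1} + 1 / L_n` propagates
lower bounds: if `∑_{n < k} p_n ≤ 1`, then `e⁻¹ (R_h - R_k) ≤ η_j ≤ R_j` for `j ≤ h ≤ k`.
Differentiating the recursion gives a linear recursion for `-η_n'` whose damping stays bounded
below as long as `k x ≤ 1 / 2`. So at a crossover `x F_{k-1}(x) = 1` with `h = k / 2`, up to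
constants, `1 / x` lies between `B_h (R_h - R_k)` and `∑_{n < k} L_n R_n`, and `-η_0'(x)` lies
between `B_h (R_h - R_k) ^ 2` and `∑_{n < k} L_n R_n ^ 2`.

The upper bounds grow with exponents `d_H + a` and `d_H + 2 a`, where `a = 2 - d_H + ρ`. The lower
bounds need not, since `R_h - R_k` may be far smaller than `R_h`; but `R_N → 0` forces
`R_{2^i} - R_{2^{i+1}}` to have the full exponent `a` along infinitely many `i`, and these suffice
because `d_s` is assumed to exist. Comparing exponents there yields
`(2 - d_s / 2) (2 + ρ) = 4 - d_H + 2 ρ`.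
-/

open Filter Topology Finset

lemma eventually_log_div_log_le {ι : Type*} {l : Filter ι} {t u v : ι → ℝ}
    (hu : ∀ᶠ i in l, 0 < u i) (ht : Tendsto t l atTop) (huv : u ≤ᶠ[l] v) :
    ∀ᶠ i in l, Real.log (u i) / Real.log (t i) ≤ Real.log (v i) / Real.log (t i) := by
  filter_upwards [hu, ht.eventually_gt_atTop 1, huv] with i hui hti huvi
  exact div_le_div_of_nonneg_right (Real.log_le_log hui huvi) (Real.log_pos hti).le

/-- Growth exponents: `u = t ^ (s + o(1))` along `l`, where `t` is the scale in terms of which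
growth is measured. Positivity has to be part of the notion, because `Real.log` is even. -/
structure HasExponent {ι : Type*} (l : Filter ι) (t u : ι → ℝ) (s : ℝ) : Prop where
  eventually_pos : ∀ᶠ i in l, 0 < u i
  tendsto_log_div_log : Tendsto (fun i => Real.log (u i) / Real.log (t i)) l (𝓝 s)

namespace HasExponent

variable {ι κ : Type*} {l l' : Filter ι} {t u v w : ι → ℝ} {r s : ℝ}

lemma mono (hu : HasExponent l t u s) (hl : l' ≤ l) : HasExponent l' t u s :=
  ⟨hu.eventually_pos.filter_mono hl, hu.tendsto_log_div_log.mono_left hl⟩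

lemma congr' (hu : HasExponent l t u s) (huv : u =ᶠ[l] v) : HasExponent l t v s :=
  ⟨hu.eventually_pos.congr (huv.mono fun i hi => by rw [hi]),
    hu.tendsto_log_div_log.congr' (huv.mono fun i hi => by rw [hi])⟩

lemma unique [l.NeBot] (hu : HasExponent l t u s) (hu' : HasExponent l t u r) : s = r :=
  tendsto_nhds_unique hu.tendsto_log_div_log hu'.tendsto_log_div_log

lemma self (ht : Tendsto t l atTop) : HasExponent l t t 1 := by
  refine ⟨ht.eventually_gt_atTop 0, tendsto_const_nhds.congr' ?_⟩
  filter_upwards [ht.eventually_gt_atTop 1] with i hi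
  exact (div_self (Real.log_pos hi).ne').symm

lemma const (ht : Tendsto t l atTop) {c : ℝ} (hc : 0 < c) : HasExponent l t (fun _ => c) 0 :=
  ⟨.of_forall fun _ => hc, tendsto_const_nhds.div_atTop (Real.tendsto_log_atTop.comp ht)⟩

lemma log_scale (ht : Tendsto t l atTop) : HasExponent l t (fun i => Real.log (t i)) 0 :=
  ⟨(ht.eventually_gt_atTop 1).mono fun _ => Real.log_pos,
    Real.isLittleO_log_id_atTop.tendsto_div_nhds_zero.comp (Real.tendsto_log_atTop.comp ht)⟩

lemma mul (hu : HasExponent l t u s) (hv : HasExponent l t v r) :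
    HasExponent l t (fun i => u i * v i) (s + r) := by
  refine ⟨(hu.eventually_pos.and hv.eventually_pos).mono fun i hi => mul_pos hi.1 hi.2, ?_⟩
  refine (hu.tendsto_log_div_log.add hv.tendsto_log_div_log).congr' ?_
  filter_upwards [hu.eventually_pos, hv.eventually_pos] with i hui hvi
  rw [Real.log_mul hui.ne' hvi.ne', add_div]

lemma inv (hu : HasExponent l t u s) : HasExponent l t (fun i => (u i)⁻¹) (-s) :=
  ⟨hu.eventually_pos.mono fun _ => inv_pos.2,
    hu.tendsto_log_div_log.neg.congr fun i => by rw [Real.log_inv, neg_div]⟩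

lemma div (hu : HasExponent l t u s) (hv : HasExponent l t v r) :
    HasExponent l t (fun i => u i / v i) (s - r) := by
  simpa only [div_eq_mul_inv, sub_eq_add_neg] using hu.mul hv.inv

lemma rpow (hu : HasExponent l t u s) (p : ℝ) : HasExponent l t (fun i => u i ^ p) (p * s) := by
  refine ⟨hu.eventually_pos.mono fun i hi => Real.rpow_pos_of_pos hi p, ?_⟩
  refine (hu.tendsto_log_div_log.const_mul p).congr' ?_
  filter_upwards [hu.eventually_pos] with i hi
  rw [Real.log_rpow hi, mul_div_assoc]

lemma const_mul (ht : Tendsto t l atTop) {c : ℝ} (hc : 0 < c) (hu : HasExponent l t u s) :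
    HasExponent l t (fun i => c * u i) s := by
  simpa only [zero_add] using (const ht hc).mul hu

lemma comp {m : Filter κ} {τ f : κ → ℝ} {φ : ι → κ} {e : ℝ} (hf : HasExponent m τ f e)
    (hτ : Tendsto τ m atTop) (hφ : Tendsto φ l m)
    (hτφ : HasExponent l t (fun i => τ (φ i)) s) :
    HasExponent l t (fun i => f (φ i)) (e * s) := by
  refine ⟨hφ.eventually hf.eventually_pos, ?_⟩
  refine ((hf.tendsto_log_div_log.comp hφ).mul hτφ.tendsto_log_div_log).congr' ?_
  filter_upwards [(hτ.comp hφ).eventually_gt_atTop 1] with i hi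
  exact div_mul_div_cancel₀ (Real.log_pos hi).ne'

lemma tendsto_atTop (hu : HasExponent l t u s) (ht : Tendsto t l atTop) (hs : 0 < s) :
    Tendsto u l atTop := by
  have hlog : Tendsto (fun i => Real.log (u i)) l atTop := by
    have hlog_t := Real.tendsto_log_atTop.comp ht
    refine (hu.tendsto_log_div_log.pos_mul_atTop hs hlog_t).congr' ?_
    filter_upwards [hlog_t.eventually_gt_atTop 0] with i hi
    exact div_mul_cancel₀ _ hi.ne'
  refine (Real.tendsto_exp_atTop.comp hlog).congr' ?_
  exact hu.eventually_pos.mono fun i hi => Real.exp_log hi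

lemma isLittleO (hu : HasExponent l t u s) (hv : HasExponent l t v r) (ht : Tendsto t l atTop)
    (hsr : s < r) : u =o[l] v := by
  refine (Asymptotics.isLittleO_iff_tendsto' ?_).2 ?_
  · exact hv.eventually_pos.mono fun i hi h0 => absurd h0 hi.ne'
  · refine ((hv.div hu).tendsto_atTop ht (sub_pos.2 hsr)).inv_tendsto_atTop.congr fun i => ?_
    exact inv_div _ _

lemma le_of_eventuallyLE [l.NeBot] (hu : HasExponent l t u s) (hv : HasExponent l t v r)
    (ht : Tendsto t l atTop) (huv : u ≤ᶠ[l] v) : s ≤ r :=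
  le_of_tendsto_of_tendsto hu.tendsto_log_div_log hv.tendsto_log_div_log
    (eventually_log_div_log_le hu.eventually_pos ht huv)

lemma of_forall_gt (hu : HasExponent l t u s) (ht : Tendsto t l atTop) (huv : u ≤ᶠ[l] v)
    (hv : ∀ r > s, ∃ w, HasExponent l t w r ∧ v ≤ᶠ[l] w) : HasExponent l t v s := by
  have hv_pos : ∀ᶠ i in l, 0 < v i :=
    (hu.eventually_pos.and huv).mono fun i hi => hi.1.trans_le hi.2
  refine ⟨hv_pos, tendsto_order.2 ⟨fun a has => ?_, fun b hsb => ?_⟩⟩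
  · filter_upwards [hu.tendsto_log_div_log.eventually_const_lt has,
      eventually_log_div_log_le hu.eventually_pos ht huv] with i hai hi
    exact hai.trans_le hi
  · obtain ⟨r, hsr, hrb⟩ := exists_between hsb
    obtain ⟨w, hw, hvw⟩ := hv r hsr
    filter_upwards [hw.tendsto_log_div_log.eventually_lt_const hrb,
      eventually_log_div_log_le hv_pos ht hvw] with i hib hi
    exact hi.trans_lt hib

lemma squeeze (hu : HasExponent l t u s) (hw : HasExponent l t w s) (ht : Tendsto t l atTop)
    (huv : u ≤ᶠ[l] v) (hvw : v ≤ᶠ[l] w) : HasExponent l t v s := by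
  have hv_pos : ∀ᶠ i in l, 0 < v i :=
    (hu.eventually_pos.and huv).mono fun i hi => hi.1.trans_le hi.2
  exact ⟨hv_pos, tendsto_of_tendsto_of_tendsto_of_le_of_le' hu.tendsto_log_div_log
    hw.tendsto_log_div_log (eventually_log_div_log_le hu.eventually_pos ht huv)
    (eventually_log_div_log_le hv_pos ht hvw)⟩

lemma of_log_bounds (ht : Tendsto t l atTop) {c₁ c₂ p₁ p₂ : ℝ} (hc₁ : 0 < c₁) (hc₂ : 0 < c₂)
    (hlower : ∀ᶠ i in l, c₁ * t i ^ s * Real.log (t i) ^ p₁ ≤ u i)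
    (hupper : ∀ᶠ i in l, u i ≤ c₂ * t i ^ s * Real.log (t i) ^ p₂) : HasExponent l t u s := by
  have hbound {c : ℝ} (hc : 0 < c) (p : ℝ) :
      HasExponent l t (fun i => c * t i ^ s * Real.log (t i) ^ p) s := by
    simpa using (((self ht).rpow s).const_mul ht hc).mul ((log_scale ht).rpow p)
  exact (hbound hc₁ p₁).squeeze (hbound hc₂ p₂) ht hlower hupper

lemma comp_natCast {X : ℕ → ℝ} (hX : HasExponent atTop (Nat.cast : ℕ → ℝ) X s)
    (ht : Tendsto t l atTop) {φ : ι → ℕ} {c C : ℝ} (hc : 0 < c) (hC : 0 < C)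
    (hlower : ∀ᶠ i in l, c * t i ≤ φ i) (hupper : ∀ᶠ i in l, φ i ≤ C * t i) :
    HasExponent l t (fun i => X (φ i)) s := by
  have hφ : HasExponent l t (fun i => (φ i : ℝ)) 1 :=
    ((self ht).const_mul ht hc).squeeze ((self ht).const_mul ht hC) ht hlower hupper
  have hφ_atTop : Tendsto φ l atTop :=
    tendsto_natCast_atTop_iff.1 (hφ.tendsto_atTop ht one_pos)
  simpa only [mul_one] using hX.comp tendsto_natCast_atTop_atTop hφ_atTop hφ

end HasExponent

lemma NAsymp.hasExponent {X : ℕ → ℝ} {a : ℝ} (hX : NAsymp X a) :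
    HasExponent atTop (Nat.cast : ℕ → ℝ) X a := by
  obtain ⟨c₁, c₂, p₁, p₂, N₀, hc₁, hc₁₂, -, hbounds⟩ := hX
  exact .of_log_bounds tendsto_natCast_atTop_atTop hc₁ (hc₁.trans_le hc₁₂)
    ((eventually_gt_atTop N₀).mono fun N hN => (hbounds N hN).1)
    ((eventually_gt_atTop N₀).mono fun N hN => (hbounds N hN).2)

lemma tendsto_one_div_nhdsGT_zero : Tendsto (fun x : ℝ => 1 / x) (𝓝[>] 0) atTop := by
  simpa only [one_div] using tendsto_inv_nhdsGT_zero

lemma ZeroAsymp.hasExponent {f : ℝ → ℝ} {a : ℝ} (hf : ZeroAsymp f a) :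
    HasExponent (𝓝[>] 0) (fun x => 1 / x) f (-a) := by
  obtain ⟨c₁, c₂, p₁, p₂, x₀, hc₁, hc₁₂, -, hx₀, -, hbounds⟩ := hf
  have hrpow {x : ℝ} (hx : x ∈ Set.Ioo 0 x₀) : (1 / x) ^ (-a) = x ^ a := by
    rw [one_div, Real.inv_rpow hx.1.le, Real.rpow_neg hx.1.le, inv_inv]
  refine .of_log_bounds (p₁ := p₁) (p₂ := p₂) tendsto_one_div_nhdsGT_zero hc₁
    (hc₁.trans_le hc₁₂) ?_ ?_
  all_goals
    filter_upwards [Ioo_mem_nhdsGT hx₀] with x hx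
    rw [hrpow hx]
  · exact (hbounds x hx.1 hx.2).1
  · exact (hbounds x hx.1 hx.2).2

lemma tendsto_two_pow_atTop : Tendsto (fun i : ℕ => (2 : ℝ) ^ i) atTop atTop :=
  tendsto_pow_atTop_atTop_of_one_lt one_lt_two

lemma hasExponent_natCast_dyadic :
    HasExponent atTop (fun i : ℕ => (2 : ℝ) ^ i) (Nat.cast : ℕ → ℝ) 0 := by
  have hlog := (HasExponent.log_scale tendsto_two_pow_atTop).const_mul tendsto_two_pow_atTop
    (inv_pos.2 (Real.log_pos one_lt_two))
  refine hlog.congr' (.of_forall fun i => ?_)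
  have hlog2 : Real.log 2 ≠ 0 := (Real.log_pos one_lt_two).ne'
  simp only [Real.log_pow]
  field_simp

namespace HasExponent

variable {u : ℕ → ℝ} {s : ℝ}

lemma of_comp_succ (hu : HasExponent atTop (Nat.cast : ℕ → ℝ) (fun N => u (N + 1)) s) :
    HasExponent atTop (Nat.cast : ℕ → ℝ) u s := by
  have hpred : ∀ᶠ N : ℕ in atTop, 1 / 2 * (N : ℝ) ≤ (N - 1 : ℕ) := by
    filter_upwards [eventually_ge_atTop 2] with N hN
    have : (2 : ℝ) ≤ N := by exact_mod_cast hN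
    rw [Nat.cast_pred (by omega)]
    linarith
  refine (hu.comp_natCast (C := 1) tendsto_natCast_atTop_atTop (by norm_num) one_pos hpred
    (.of_forall fun N => ?_)).congr' ?_
  · rw [one_mul]
    exact_mod_cast N.sub_le 1
  · filter_upwards [eventually_ge_atTop 1] with N hN
    rw [Nat.sub_add_cancel hN]

lemma comp_two_pow (hu : HasExponent atTop (Nat.cast : ℕ → ℝ) u s) (j : ℕ) :
    HasExponent atTop (fun i : ℕ => (2 : ℝ) ^ i) (fun i => u (2 ^ (i + j))) s := by
  have hφ (i : ℕ) : ((2 ^ (i + j) : ℕ) : ℝ) = 2 ^ j * 2 ^ i := by push_cast; ring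
  have hj : (0 : ℝ) < 2 ^ j := by positivity
  exact hu.comp_natCast tendsto_two_pow_atTop hj hj (.of_forall fun i => (hφ i).ge)
    (.of_forall fun i => (hφ i).le)

lemma comp_succ (hu : HasExponent atTop (fun i : ℕ => (2 : ℝ) ^ i) u s) :
    HasExponent atTop (fun i : ℕ => (2 : ℝ) ^ i) (fun i => u (i + 1)) s := by
  have hscale : HasExponent atTop (fun i : ℕ => (2 : ℝ) ^ i) (fun i => (2 : ℝ) ^ (i + 1)) 1 := by
    simpa only [pow_succ'] using
      (self tendsto_two_pow_atTop).const_mul tendsto_two_pow_atTop two_pos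
  simpa only [mul_one] using hu.comp tendsto_two_pow_atTop (tendsto_add_atTop_nat 1) hscale

lemma sum_range (hu : HasExponent atTop (fun i : ℕ => (2 : ℝ) ^ i) u s) (hs : 0 ≤ s)
    (hu_nonneg : ∀ i, 0 ≤ u i) :
    HasExponent atTop (fun i : ℕ => (2 : ℝ) ^ i) (fun i => ∑ j ∈ range (i + 1), u j) s := by
  refine hu.of_forall_gt tendsto_two_pow_atTop (.of_forall fun i => ?_) fun r hr => ?_
  · exact single_le_sum (fun j _ => hu_nonneg j) (self_mem_range_succ i)
  set b : ℝ := 2 ^ r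
  have hb : 1 < b := Real.one_lt_rpow one_lt_two (hs.trans_lt hr)
  have hpow (i : ℕ) : ((2 : ℝ) ^ i) ^ r = b ^ i := Real.rpow_pow_comm zero_le_two r i |>.symm
  have hexp : HasExponent atTop (fun i : ℕ => (2 : ℝ) ^ i) (fun i => b ^ i) r := by
    simpa only [hpow, mul_one] using (self tendsto_two_pow_atTop).rpow r
  have hgeom_atTop : Tendsto (fun n => ∑ i ∈ range n, b ^ i) atTop atTop := by
    refine tendsto_atTop_mono (fun n => ?_) tendsto_natCast_atTop_atTop
    simpa using card_nsmul_le_sum (range n) (fun i => b ^ i) 1 fun i _ => one_le_pow₀ hb.le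
  have hsum := (hu.isLittleO hexp tendsto_two_pow_atTop hr).sum_range
    (fun i => by positivity) hgeom_atTop
  refine ⟨fun i => b / (b - 1) * b ^ i,
    hexp.const_mul tendsto_two_pow_atTop (div_pos (by linarith) (by linarith)), ?_⟩
  filter_upwards [(tendsto_add_atTop_nat 1).eventually (hsum.bound one_pos)] with i hi
  calc ∑ j ∈ range (i + 1), u j ≤ ∑ j ∈ range (i + 1), b ^ j := by
        have hgeom_nonneg : 0 ≤ ∑ j ∈ range (i + 1), b ^ j := sum_nonneg fun j _ => by positivity
        rw [one_mul, Real.norm_of_nonneg hgeom_nonneg] at hi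
        exact (Real.le_norm_self _).trans hi
    _ = (b ^ (i + 1) - 1) / (b - 1) := geom_sum_eq hb.ne' _
    _ ≤ b / (b - 1) * b ^ i := by
        rw [div_mul_eq_mul_div, ← pow_succ']
        exact div_le_div_of_nonneg_right (sub_le_self _ zero_le_one) (by linarith)

end HasExponent

section WeightedSums

variable {L v : ℕ → ℝ} {d q : ℝ}

-- The index `2 ^ j / 2` is where the dyadic block ending at `2 ^ j` begins, and `0` for `j = 0`.
lemma sum_range_two_pow_mul_le (hL : ∀ n, 0 ≤ L n) (hv : Antitone v) (hv_nonneg : ∀ n, 0 ≤ v n)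
    (i : ℕ) : ∑ n ∈ range (2 ^ i), L n * v n ≤
      ∑ j ∈ range (i + 1), (∑ n ∈ range (2 ^ j), L n) * v (2 ^ j / 2) := by
  induction i with
  | zero => simp
  | succ i ih =>
    have hdvd : 2 ^ (i + 1) / 2 = 2 ^ i := by omega
    rw [sum_range_succ, ← sum_range_add_sum_Ico _ (Nat.pow_le_pow_right two_pos i.le_succ), hdvd]
    refine add_le_add ih ?_
    calc ∑ n ∈ Ico (2 ^ i) (2 ^ (i + 1)), L n * v n
        ≤ ∑ n ∈ Ico (2 ^ i) (2 ^ (i + 1)), L n * v (2 ^ i) :=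
          sum_le_sum fun n hn => mul_le_mul_of_nonneg_left (hv (mem_Ico.1 hn).1) (hL n)
      _ = (∑ n ∈ Ico (2 ^ i) (2 ^ (i + 1)), L n) * v (2 ^ i) := (sum_mul ..).symm
      _ ≤ (∑ n ∈ range (2 ^ (i + 1)), L n) * v (2 ^ i) := by
          refine mul_le_mul_of_nonneg_right ?_ (hv_nonneg _)
          exact sum_le_sum_of_subset_of_nonneg (fun n hn => mem_range.2 (mem_Ico.1 hn).2)
            fun n _ _ => hL n

lemma hasExponent_sum_range_two_pow_mul (hL : ∀ n, 0 ≤ L n) (hv : Antitone v)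
    (hv_nonneg : ∀ n, 0 ≤ v n)
    (hB : HasExponent atTop (Nat.cast : ℕ → ℝ) (fun N => ∑ n ∈ range N, L n) d)
    (hq : HasExponent atTop (Nat.cast : ℕ → ℝ) v q) (hdq : 0 ≤ d + q) :
    HasExponent atTop (fun i : ℕ => (2 : ℝ) ^ i) (fun i => ∑ n ∈ range (2 ^ i), L n * v n)
      (d + q) := by
  have hB_dyadic := hB.comp_two_pow 0
  have hv_half : HasExponent atTop (fun i : ℕ => (2 : ℝ) ^ i) (fun i => v (2 ^ i / 2)) q := by
    refine hq.comp_natCast (c := 1 / 4) (C := 1) tendsto_two_pow_atTop (by norm_num) one_pos ?_ ?_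
    · filter_upwards [eventually_ge_atTop 1] with i hi
      have hquarter : 2 ^ i ≤ 4 * (2 ^ i / 2) := by
        have := Nat.pow_le_pow_right two_pos hi
        omega
      have : (2 : ℝ) ^ i ≤ 4 * (2 ^ i / 2 : ℕ) := by exact_mod_cast hquarter
      linarith
    · refine .of_forall fun i => ?_
      rw [one_mul]
      exact_mod_cast Nat.div_le_self (2 ^ i) 2
  refine (hB_dyadic.mul (hq.comp_two_pow 0)).squeeze
    ((hB_dyadic.mul hv_half).sum_range hdq fun i => ?_) tendsto_two_pow_atTop
    (.of_forall fun i => ?_) (.of_forall (sum_range_two_pow_mul_le hL hv hv_nonneg))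
  · exact mul_nonneg (sum_nonneg fun n _ => hL n) (hv_nonneg _)
  · simp only [add_zero, sum_mul]
    exact sum_le_sum fun n hn => mul_le_mul_of_nonneg_left (hv (mem_range.1 hn).le) (hL n)

end WeightedSums

/-- The resistance `R_n = ∑_{m ≥ n} 1 / L_m` between vertex `n` and infinity. -/
noncomputable def resistance (L : ℕ → ℝ) (n : ℕ) : ℝ := ∑' m, 1 / L (n + m)

section Resistance

variable {L : ℕ → ℝ}

lemma resistance_eq_add (hsum : Summable fun n => 1 / L n) (n : ℕ) :
    resistance L n = 1 / L n + resistance L (n + 1) := by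
  have hshift : Summable fun m => 1 / L (n + m) := by
    simpa only [add_comm n] using (summable_nat_add_iff n).2 hsum
  rw [resistance, hshift.tsum_eq_zero_add, add_zero]
  simp only [resistance, Nat.add_right_comm n 1, Nat.add_assoc]

lemma resistance_nonneg (hL : ∀ n, 0 < L n) (n : ℕ) : 0 ≤ resistance L n :=
  tsum_nonneg fun _ => (one_div_pos.2 (hL _)).le

lemma resistance_pos (hL : ∀ n, 0 < L n) (hsum : Summable fun n => 1 / L n) (n : ℕ) :
    0 < resistance L n := by
  rw [resistance_eq_add hsum]
  exact add_pos_of_pos_of_nonneg (one_div_pos.2 (hL n)) (resistance_nonneg hL _)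

lemma antitone_resistance (hL : ∀ n, 0 < L n) (hsum : Summable fun n => 1 / L n) :
    Antitone (resistance L) := by
  refine antitone_nat_of_succ_le fun n => ?_
  rw [resistance_eq_add hsum n]
  exact le_add_of_nonneg_left (one_div_pos.2 (hL n)).le

lemma tendsto_resistance_atTop (L : ℕ → ℝ) : Tendsto (resistance L) atTop (𝓝 0) :=
  (tendsto_sum_nat_add fun n => 1 / L n).congr fun n => tsum_congr fun m => by rw [add_comm]

lemma sum_Ico_one_div (hsum : Summable fun n => 1 / L n) {j k : ℕ} (hjk : j ≤ k) :
    ∑ n ∈ Ico j k, 1 / L n = resistance L j - resistance L k := by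
  induction k, hjk using Nat.le_induction with
  | base => simp
  | succ k hjk ih =>
    rw [sum_Ico_succ_top hjk, ih, resistance_eq_add hsum k]
    ring

lemma sq_sub_le_sum_range_mul_resistance (hL : ∀ n, 0 < L n) (hsum : Summable fun n => 1 / L n)
    {j k : ℕ} (hjk : j ≤ k) :
    ((k : ℝ) - j) ^ 2 ≤ (∑ n ∈ range k, L n) * resistance L j := by
  have hcauchy : (∑ _n ∈ Ico j k, (1 : ℝ)) ^ 2 ≤ (∑ n ∈ Ico j k, L n) * ∑ n ∈ Ico j k, 1 / L n :=
    sum_sq_le_sum_mul_sum_of_sq_le_mul _ (fun n _ => (hL n).le)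
      (fun n _ => (one_div_pos.2 (hL n)).le)
      fun n _ => by rw [one_pow, mul_one_div_cancel (hL n).ne']
  calc ((k : ℝ) - j) ^ 2 = (∑ _n ∈ Ico j k, (1 : ℝ)) ^ 2 := by
        rw [sum_const, Nat.card_Ico, nsmul_one, Nat.cast_sub hjk]
    _ ≤ (∑ n ∈ Ico j k, L n) * ∑ n ∈ Ico j k, 1 / L n := hcauchy
    _ ≤ (∑ n ∈ range k, L n) * resistance L j := by
        refine mul_le_mul ?_ ?_ (sum_nonneg fun n _ => (one_div_pos.2 (hL n)).le)
          (sum_nonneg fun n _ => (hL n).le)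
        · exact sum_le_sum_of_subset_of_nonneg (fun n hn => mem_range.2 (mem_Ico.1 hn).2)
            fun n _ _ => (hL n).le
        · rw [sum_Ico_one_div hsum hjk]
          exact sub_le_self _ (resistance_nonneg hL k)

lemma two_le_volume_exponent_add_resistance_exponent (hL : ∀ n, 0 < L n)
    (hsum : Summable fun n => 1 / L n) {d a : ℝ}
    (hB : HasExponent atTop (Nat.cast : ℕ → ℝ) (fun N => ∑ n ∈ range N, L n) d)
    (hR : HasExponent atTop (Nat.cast : ℕ → ℝ) (resistance L) a) : 2 ≤ d + a := by
  have hsq : HasExponent atTop (fun i : ℕ => (2 : ℝ) ^ i) (fun i => (2 : ℝ) ^ i * 2 ^ i) (1 + 1) :=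
    (HasExponent.self tendsto_two_pow_atTop).mul (.self tendsto_two_pow_atTop)
  refine one_add_one_eq_two.ge.trans (hsq.le_of_eventuallyLE
    ((hB.comp_two_pow 1).mul (hR.comp_two_pow 0)) tendsto_two_pow_atTop (.of_forall fun i => ?_))
  calc (2 : ℝ) ^ i * 2 ^ i = ((2 ^ (i + 1) : ℕ) - (2 ^ i : ℕ)) ^ 2 := by push_cast; ring
    _ ≤ _ := sq_sub_le_sum_range_mul_resistance hL hsum (Nat.pow_le_pow_right two_pos i.le_succ)

end Resistance

section GoodScales

variable {r : ℕ → ℝ}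

lemma frequently_div_le_sub_succ (hr : ∀ i, 0 < r i) (hr0 : Tendsto r atTop (𝓝 0)) :
    ∃ᶠ i : ℕ in atTop, r (i + 1) / (((i : ℝ) + 1) * (i + 3)) ≤ r i - r (i + 1) := by
  intro hfail
  obtain ⟨M, hM⟩ := eventually_atTop.1 hfail
  -- The weight telescopes `1 + 1 / ((i + 1) (i + 3)) = (i + 2) ^ 2 / ((i + 1) (i + 3))`, so that
  -- the failure makes `w` nondecreasing.
  set w : ℕ → ℝ := fun i => r i * ((i + 1) / (i + 2)) with hw
  have hw_succ (i : ℕ) (hi : M ≤ i) : w i ≤ w (i + 1) := by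
    have hri : r i < r (i + 1) * ((i + 2) ^ 2 / ((i + 1) * (i + 3))) := by
      have hsplit : r (i + 1) * (((i : ℝ) + 2) ^ 2 / ((i + 1) * (i + 3))) =
          r (i + 1) + r (i + 1) / ((i + 1) * (i + 3)) := by
        field_simp
        ring
      linarith [not_le.1 (hM i hi)]
    calc w i ≤ r (i + 1) * ((i + 2) ^ 2 / ((i + 1) * (i + 3))) * ((i + 1) / (i + 2)) :=
          mul_le_mul_of_nonneg_right hri.le (by positivity)
      _ = w (i + 1) := by
          simp only [hw]
          push_cast
          field_simp
          ring
  have hw_ge (i : ℕ) (hi : M ≤ i) : w M ≤ r i := by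
    calc w M ≤ w i := Nat.le_induction le_rfl (fun i hi ih => ih.trans (hw_succ i hi)) i hi
      _ ≤ r i := by
          refine mul_le_of_le_one_right (hr i).le ?_
          rw [div_le_one (by positivity)]
          linarith
  have hw_pos : 0 < w M := mul_pos (hr M) (by positivity)
  exact hw_pos.not_ge (ge_of_tendsto hr0 (eventually_atTop.2 ⟨M, hw_ge⟩))

lemma exists_hasExponent_sub_succ {a : ℝ} (hr : ∀ i, 0 < r i) (hr0 : Tendsto r atTop (𝓝 0))
    (hra : HasExponent atTop (fun i : ℕ => (2 : ℝ) ^ i) r a)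
    (hra_succ : HasExponent atTop (fun i : ℕ => (2 : ℝ) ^ i) (fun i => r (i + 1)) a) :
    ∃ l ≤ atTop, l.NeBot ∧
      HasExponent l (fun i : ℕ => (2 : ℝ) ^ i) (fun i => r i - r (i + 1)) a := by
  set l := atTop ⊓ 𝓟 {i : ℕ | r (i + 1) / (((i : ℝ) + 1) * (i + 3)) ≤ r i - r (i + 1)}
  have hl : l ≤ atTop := inf_le_left
  have hpoly : HasExponent atTop (fun i : ℕ => (2 : ℝ) ^ i) (fun i => 8 * ((i : ℝ) * i)) 0 := by
    have hsq := hasExponent_natCast_dyadic.mul hasExponent_natCast_dyadic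
    simpa only [add_zero] using hsq.const_mul tendsto_two_pow_atTop (by norm_num : (0 : ℝ) < 8)
  have hlower := hra_succ.div hpoly
  rw [sub_zero] at hlower
  refine ⟨l, hl, frequently_mem_iff_neBot.1 (frequently_div_le_sub_succ hr hr0),
    (hlower.mono hl).squeeze (hra.mono hl) (tendsto_two_pow_atTop.mono_left hl) ?_
      (.of_forall fun i => sub_le_self _ (hr (i + 1)).le)⟩
  filter_upwards [mem_inf_of_right (mem_principal_self _), hl (eventually_ge_atTop 1)]
    with i hgood hi
  refine le_trans ?_ hgood
  have hi' : (1 : ℝ) ≤ i := by exact_mod_cast hi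
  exact div_le_div_of_nonneg_left (hr (i + 1)).le (by positivity) (by nlinarith)

end GoodScales

/-- The family `η n` of normalised return generating functions of the multigraphs obtained by
deleting the vertices `0, …, n - 1`, with derivatives `η' n`. The recursion is the first-return
decomposition at vertex `n`, and `η n` increases to the resistance `R_n` as `x → 0`. -/
structure IsReturnFamily (L : ℕ → ℝ) (η η' : ℕ → ℝ → ℝ) : Prop where
  pos (n : ℕ) : ∀ x ∈ Set.Ioo (0 : ℝ) 1, 0 < η n x
  hasDerivAt (n : ℕ) : ∀ x ∈ Set.Ioo (0 : ℝ) 1, HasDerivAt (η n) (η' n x) x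
  deriv_nonpos (n : ℕ) : ∀ x ∈ Set.Ioo (0 : ℝ) 1, η' n x ≤ 0
  convexOn (n : ℕ) : ConvexOn ℝ (Set.Ioo (0 : ℝ) 1) (η n)
  tendsto_resistance (n : ℕ) : Tendsto (η n) (𝓝[>] 0) (𝓝 (resistance L n))
  recursion (n : ℕ) : ∀ x ∈ Set.Ioo (0 : ℝ) 1,
    η n x = (η (n + 1) x + 1 / L n) / (1 + x * L n * η (n + 1) x)

/-- The load `p_n = x L_n η_{n+1}(x)` of edge `n`; the recursion says
`η_n (1 + p_n) = η_{n+1} + 1 / L_n`. -/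
def edgeLoad (L : ℕ → ℝ) (η : ℕ → ℝ → ℝ) (n : ℕ) (x : ℝ) : ℝ := x * L n * η (n + 1) x

/-- The factor by which `-η_{n+1}'` enters `-η_n'` in the differentiated recursion. -/
noncomputable def damping (L : ℕ → ℝ) (η : ℕ → ℝ → ℝ) (n : ℕ) (x : ℝ) : ℝ :=
  (1 - x) / (1 + edgeLoad L η n x) ^ 2

/-- The contribution of edge `n` to `-η_n'` in the differentiated recursion. -/
noncomputable def derivSource (L : ℕ → ℝ) (η : ℕ → ℝ → ℝ) (n : ℕ) (x : ℝ) : ℝ :=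
  L n * η (n + 1) x * η n x / (1 + edgeLoad L η n x)

/-- The paper's `F_{k-1}(x)`. The length scale `k` is resolved at those `x` with
`x F_{k-1}(x) = 1`. -/
def crossoverSum (L : ℕ → ℝ) (η : ℕ → ℝ → ℝ) (k : ℕ) (x : ℝ) : ℝ :=
  ∑ j ∈ range k, L j * η (j + 1) x

lemma damping_nonneg (L : ℕ → ℝ) (η : ℕ → ℝ → ℝ) {x : ℝ} (hx : x ≤ 1) (n : ℕ) :
    0 ≤ damping L η n x :=
  div_nonneg (sub_nonneg.2 hx) (sq_nonneg _)

namespace IsReturnFamily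

variable {L : ℕ → ℝ} {η η' : ℕ → ℝ → ℝ} {x : ℝ} {j h k n : ℕ}

lemma antitoneOn (hη : IsReturnFamily L η η') (n : ℕ) : AntitoneOn (η n) (Set.Ioo 0 1) := by
  refine antitoneOn_of_deriv_nonpos (convex_Ioo 0 1)
    (fun x hx => (hη.hasDerivAt n x hx).continuousAt.continuousWithinAt)
    (fun x hx => (hη.hasDerivAt n x (interior_subset hx)).differentiableAt.differentiableWithinAt)
    fun x hx => ?_
  have hx := interior_subset hx
  exact (hη.hasDerivAt n x hx).deriv.trans_le (hη.deriv_nonpos n x hx)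

lemma le_resistance (hη : IsReturnFamily L η η') (hx : x ∈ Set.Ioo (0 : ℝ) 1) (n : ℕ) :
    η n x ≤ resistance L n := by
  refine ge_of_tendsto (hη.tendsto_resistance n) ?_
  filter_upwards [Ioo_mem_nhdsGT hx.1] with y hy
  exact hη.antitoneOn n ⟨hy.1, hy.2.trans hx.2⟩ hx hy.2.le

lemma neg_deriv_le (hη : IsReturnFamily L η η') (hx : x ∈ Set.Ioo (0 : ℝ) 1) (n : ℕ) :
    -η' n x ≤ 2 * (resistance L n / x) := by
  have hx_half : x / 2 ∈ Set.Ioo (0 : ℝ) 1 := ⟨half_pos hx.1, (half_lt_self hx.1).trans hx.2⟩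
  have hslope := (hη.convexOn n).slope_le_of_hasDerivAt hx_half hx (half_lt_self hx.1)
    (hη.hasDerivAt n x hx)
  rw [slope_def_field, sub_half, div_le_iff₀ (half_pos hx.1)] at hslope
  have hpos := hη.pos n x hx
  have hle := hη.le_resistance hx_half n
  rw [← mul_div_assoc, le_div_iff₀ hx.1]
  linarith

section Pointwise

variable (hη : IsReturnFamily L η η') (hL : ∀ n, 0 < L n) (hx : x ∈ Set.Ioo (0 : ℝ) 1)

include hη hL hx

lemma edgeLoad_pos (n : ℕ) : 0 < edgeLoad L η n x :=
  mul_pos (mul_pos hx.1 (hL n)) (hη.pos (n + 1) x hx)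

lemma mul_one_add_edgeLoad (n : ℕ) :
    η n x * (1 + edgeLoad L η n x) = η (n + 1) x + 1 / L n := by
  have hload := hη.edgeLoad_pos hL hx n
  rw [hη.recursion n x hx]
  exact div_mul_cancel₀ _ (by unfold edgeLoad at hload; linarith)

lemma sum_edgeLoad_le {s : Finset ℕ} (hs : s ⊆ range k) :
    ∑ n ∈ s, edgeLoad L η n x ≤ x * crossoverSum L η k x := by
  calc ∑ n ∈ s, edgeLoad L η n x ≤ ∑ n ∈ range k, edgeLoad L η n x :=
        sum_le_sum_of_subset_of_nonneg hs fun n _ _ => (hη.edgeLoad_pos hL hx n).le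
    _ = x * crossoverSum L η k x := by simp only [edgeLoad, crossoverSum, mul_sum, mul_assoc]

lemma resistance_sub_add_le (hsum : Summable fun n => 1 / L n) (hjk : j ≤ k) :
    resistance L j - resistance L k + η k x ≤
      η j x * Real.exp (∑ n ∈ Ico j k, edgeLoad L η n x) := by
  induction k, hjk using Nat.le_induction with
  | base => simp
  | succ k hjk ih =>
    set p := edgeLoad L η k x
    have hp : 0 < p := hη.edgeLoad_pos hL hx k
    have hdiff : 0 ≤ resistance L j - resistance L k :=
      sub_nonneg.2 (antitone_resistance hL hsum hjk)
    calc resistance L j - resistance L (k + 1) + η (k + 1) x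
        = resistance L j - resistance L k + η k x * (1 + p) := by
          rw [hη.mul_one_add_edgeLoad hL hx, resistance_eq_add hsum k]
          ring
      _ ≤ (resistance L j - resistance L k + η k x) * (1 + p) := by
          rw [add_mul]
          gcongr
          exact le_mul_of_one_le_right hdiff (by linarith)
      _ ≤ η j x * Real.exp (∑ n ∈ Ico j k, edgeLoad L η n x) * Real.exp p := by
          have := hη.pos j x hx
          exact mul_le_mul ih (by linarith [Real.add_one_le_exp p]) (by linarith) (by positivity)
      _ = η j x * Real.exp (∑ n ∈ Ico j (k + 1), edgeLoad L η n x) := by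
          rw [sum_Ico_succ_top hjk, Real.exp_add, mul_assoc]

lemma exp_neg_one_mul_resistance_sub_le (hsum : Summable fun n => 1 / L n)
    (hF : x * crossoverSum L η k x ≤ 1) (hjh : j ≤ h) (hhk : h ≤ k) :
    Real.exp (-1) * (resistance L h - resistance L k) ≤ η j x := by
  have hηj := hη.pos j x hx
  have hload : ∑ n ∈ Ico j k, edgeLoad L η n x ≤ 1 :=
    (hη.sum_edgeLoad_le hL hx fun n hn => mem_range.2 (mem_Ico.1 hn).2).trans hF
  rw [Real.exp_neg, inv_mul_le_iff₀ (Real.exp_pos 1)]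
  calc resistance L h - resistance L k ≤ resistance L j - resistance L k + η k x := by
        linarith [antitone_resistance hL hsum hjh, hη.pos k x hx]
    _ ≤ η j x * Real.exp (∑ n ∈ Ico j k, edgeLoad L η n x) :=
        hη.resistance_sub_add_le hL hx hsum (hjh.trans hhk)
    _ ≤ η j x * Real.exp 1 := by gcongr
    _ = Real.exp 1 * η j x := mul_comm _ _

lemma le_crossoverSum (hsum : Summable fun n => 1 / L n)
    (hF : x * crossoverSum L η k x ≤ 1) (hhk : h ≤ k) :
    Real.exp (-1) * ((∑ n ∈ range h, L n) * (resistance L h - resistance L k)) ≤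
      crossoverSum L η k x := by
  calc Real.exp (-1) * ((∑ n ∈ range h, L n) * (resistance L h - resistance L k))
      = ∑ n ∈ range h, L n * (Real.exp (-1) * (resistance L h - resistance L k)) := by
        rw [← sum_mul]
        ring
    _ ≤ ∑ n ∈ range h, L n * η (n + 1) x := sum_le_sum fun n hn =>
        mul_le_mul_of_nonneg_left
          (hη.exp_neg_one_mul_resistance_sub_le hL hx hsum hF (mem_range.1 hn) hhk) (hL n).le
    _ ≤ crossoverSum L η k x := sum_le_sum_of_subset_of_nonneg (range_mono hhk)
        fun n _ _ => (mul_pos (hL n) (hη.pos (n + 1) x hx)).le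

lemma crossoverSum_le (hsum : Summable fun n => 1 / L n) (k : ℕ) :
    crossoverSum L η k x ≤ ∑ n ∈ range k, L n * resistance L n :=
  sum_le_sum fun n _ => mul_le_mul_of_nonneg_left
    ((hη.le_resistance hx _).trans (antitone_resistance hL hsum n.le_succ)) (hL n).le

lemma neg_deriv_eq (n : ℕ) :
    -η' n x = damping L η n x * -η' (n + 1) x + derivSource L η n x := by
  have hq : 1 + edgeLoad L η n x ≠ 0 := by
    have := hη.edgeLoad_pos hL hx n
    positivity
  have hrec := hη.mul_one_add_edgeLoad hL hx n
  have hload : HasDerivAt (edgeLoad L η n) (L n * η (n + 1) x + x * L n * η' (n + 1) x) x :=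
    (hasDerivAt_mul_const (L n)).mul (hη.hasDerivAt (n + 1) x hx)
  have hdiff := ((hη.hasDerivAt n x hx).mul (hload.const_add 1)).sub (hη.hasDerivAt (n + 1) x hx)
  have hconst := (hasDerivAt_const x (1 / L n)).congr_of_eventuallyEq
    (f₁ := fun t => η n t * (1 + edgeLoad L η n t) - η (n + 1) t) <| by
      filter_upwards [Ioo_mem_nhds hx.1 hx.2] with t ht
      exact sub_eq_of_eq_add' (hη.mul_one_add_edgeLoad hL ht n)
  have hzero := hdiff.unique hconst
  have hdet : (1 + edgeLoad L η n x) * (1 - x * L n * η n x) = 1 - x := by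
    have hcancel : L n * (1 / L n) = 1 := mul_one_div_cancel (hL n).ne'
    have hload_eq : edgeLoad L η n x = x * L n * η (n + 1) x := rfl
    linear_combination -x * L n * hrec - x * hcancel + hload_eq
  calc -η' n x
      = (1 - x * L n * η n x) / (1 + edgeLoad L η n x) * -η' (n + 1) x +
          derivSource L η n x := by
        rw [derivSource, div_mul_eq_mul_div, ← add_div, eq_div_iff hq]
        linear_combination -hzero
    _ = damping L η n x * -η' (n + 1) x + derivSource L η n x := by
        rw [damping, ← hdet, pow_two, mul_div_mul_left _ _ hq]

lemma neg_deriv_zero_eq (k : ℕ) :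
    -η' 0 x = ∑ j ∈ range k, (∏ n ∈ range j, damping L η n x) * derivSource L η j x +
      (∏ n ∈ range k, damping L η n x) * -η' k x := by
  induction k with
  | zero => simp
  | succ k ih =>
    rw [ih, sum_range_succ, prod_range_succ, hη.neg_deriv_eq hL hx k]
    ring

lemma damping_le_one (n : ℕ) : damping L η n x ≤ 1 := by
  have hload := hη.edgeLoad_pos hL hx n
  rw [damping, div_le_one (by positivity)]
  nlinarith [hx.1]

lemma derivSource_nonneg (n : ℕ) : 0 ≤ derivSource L η n x := by
  have := hη.edgeLoad_pos hL hx n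
  have := hη.pos n x hx
  have := hη.pos (n + 1) x hx
  have := hL n
  unfold derivSource
  positivity

lemma derivSource_le (hsum : Summable fun n => 1 / L n) (n : ℕ) :
    derivSource L η n x ≤ L n * resistance L n ^ 2 := by
  have hload := hη.edgeLoad_pos hL hx n
  have hηn := hη.pos n x hx
  have hηn' := hη.pos (n + 1) x hx
  have hLn := hL n
  calc derivSource L η n x ≤ L n * η (n + 1) x * η n x :=
        div_le_self (by positivity) (by linarith)
    _ = L n * (η (n + 1) x * η n x) := mul_assoc _ _ _
    _ ≤ L n * (resistance L n * resistance L n) := by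
        gcongr
        · exact resistance_nonneg hL n
        · exact (hη.le_resistance hx _).trans (antitone_resistance hL hsum n.le_succ)
        · exact hη.le_resistance hx n
    _ = L n * resistance L n ^ 2 := by rw [pow_two]

lemma le_derivSource (hsum : Summable fun n => 1 / L n) (hF : x * crossoverSum L η k x ≤ 1)
    (hnh : n < h) (hhk : h ≤ k) :
    1 / 2 * (L n * (Real.exp (-1) * (resistance L h - resistance L k)) ^ 2) ≤
      derivSource L η n x := by
  set m := Real.exp (-1) * (resistance L h - resistance L k)
  have hm : 0 ≤ m :=
    mul_nonneg (Real.exp_pos _).le (sub_nonneg.2 (antitone_resistance hL hsum hhk))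
  have hm_le {j : ℕ} (hj : j ≤ h) : m ≤ η j x :=
    hη.exp_neg_one_mul_resistance_sub_le hL hx hsum hF hj hhk
  have hload_pos := hη.edgeLoad_pos hL hx n
  have hload : edgeLoad L η n x ≤ 1 := by
    have := hη.sum_edgeLoad_le hL hx (singleton_subset_iff.2 (mem_range.2 (hnh.trans_le hhk)))
    rw [sum_singleton] at this
    exact this.trans hF
  have hLn := hL n
  have hηn' := hη.pos (n + 1) x hx
  calc 1 / 2 * (L n * m ^ 2) = L n * m * m / 2 := by ring
    _ ≤ L n * η (n + 1) x * η n x / (1 + edgeLoad L η n x) := by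
        gcongr
        · have := hη.pos n x hx
          positivity
        · exact hm_le hnh
        · exact hm_le hnh.le
        · linarith
    _ = derivSource L η n x := rfl

lemma le_prod_damping (hF : x * crossoverSum L η k x ≤ 1) (hkx : k * x ≤ 1 / 2) (hjk : j ≤ k) :
    1 / 2 * Real.exp (-2) ≤ ∏ n ∈ range j, damping L η n x := by
  have hloads : ∏ n ∈ range j, (1 + edgeLoad L η n x) ≤ Real.exp 1 := by
    calc ∏ n ∈ range j, (1 + edgeLoad L η n x) ≤ ∏ n ∈ range j, Real.exp (edgeLoad L η n x) :=
          prod_le_prod (fun n _ => by linarith [hη.edgeLoad_pos hL hx n])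
            fun n _ => by linarith [Real.add_one_le_exp (edgeLoad L η n x)]
      _ = Real.exp (∑ n ∈ range j, edgeLoad L η n x) := (Real.exp_sum _ _).symm
      _ ≤ Real.exp 1 :=
          Real.exp_le_exp.2 ((hη.sum_edgeLoad_le hL hx (range_mono hjk)).trans hF)
  have hloads_pos : 0 < ∏ n ∈ range j, (1 + edgeLoad L η n x) :=
    prod_pos fun n _ => by linarith [hη.edgeLoad_pos hL hx n]
  have hbernoulli : 1 / 2 ≤ (1 - x) ^ j := by
    have hjx : (j : ℝ) * x ≤ k * x := by
      have := hx.1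
      gcongr
    calc 1 / 2 ≤ 1 + (j : ℝ) * -x := by linarith
      _ ≤ (1 + -x) ^ j := one_add_mul_le_pow (by linarith [hx.2]) j
      _ = (1 - x) ^ j := by rw [← sub_eq_add_neg]
  calc 1 / 2 * Real.exp (-2) = 1 / 2 / Real.exp 1 ^ 2 := by
        rw [← Real.exp_nat_mul, Real.exp_neg, Nat.cast_ofNat, mul_one, ← div_eq_mul_inv]
    _ ≤ (1 - x) ^ j / (∏ n ∈ range j, (1 + edgeLoad L η n x)) ^ 2 := by gcongr
    _ = ∏ n ∈ range j, damping L η n x := by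
        simp only [damping, prod_div_distrib, prod_const, card_range, prod_pow]

lemma neg_deriv_zero_le (hsum : Summable fun n => 1 / L n)
    (hF : x * crossoverSum L η k x = 1) :
    -η' 0 x ≤ 3 * ∑ n ∈ range k, L n * resistance L n ^ 2 := by
  have hprod (j : ℕ) : ∏ n ∈ range j, damping L η n x ≤ 1 :=
    prod_le_one (fun n _ => damping_nonneg L η hx.2.le n) fun n _ => hη.damping_le_one hL hx n
  have hboundary : resistance L k / x ≤ ∑ n ∈ range k, L n * resistance L n ^ 2 := by
    calc resistance L k / x = crossoverSum L η k x * resistance L k := by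
          rw [div_eq_iff hx.1.ne', mul_right_comm, mul_comm _ x, hF, one_mul]
      _ ≤ (∑ n ∈ range k, L n * resistance L n) * resistance L k :=
          mul_le_mul_of_nonneg_right (hη.crossoverSum_le hL hx hsum k) (resistance_nonneg hL k)
      _ ≤ ∑ n ∈ range k, L n * resistance L n ^ 2 := by
          rw [sum_mul]
          refine sum_le_sum fun n hn => ?_
          rw [pow_two, ← mul_assoc]
          exact mul_le_mul_of_nonneg_left (antitone_resistance hL hsum (mem_range.1 hn).le)
            (mul_nonneg (hL n).le (resistance_nonneg hL n))
  calc -η' 0 x ≤ ∑ n ∈ range k, L n * resistance L n ^ 2 + 2 * (resistance L k / x) := by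
        rw [hη.neg_deriv_zero_eq hL hx k]
        refine add_le_add (sum_le_sum fun j _ => ?_) ?_
        · exact (mul_le_of_le_one_left (hη.derivSource_nonneg hL hx j) (hprod j)).trans
            (hη.derivSource_le hL hx hsum j)
        · exact (mul_le_of_le_one_left (neg_nonneg.2 (hη.deriv_nonpos k x hx)) (hprod k)).trans
            (hη.neg_deriv_le hx k)
    _ ≤ 3 * ∑ n ∈ range k, L n * resistance L n ^ 2 := by linarith

lemma le_neg_deriv_zero (hsum : Summable fun n => 1 / L n)
    (hF : x * crossoverSum L η k x ≤ 1) (hkx : k * x ≤ 1 / 2) (hhk : h ≤ k) :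
    1 / 4 * Real.exp (-4) *
      ((∑ n ∈ range h, L n) * (resistance L h - resistance L k) ^ 2) ≤ -η' 0 x := by
  set D := resistance L h - resistance L k
  have hprod_nonneg (j : ℕ) : 0 ≤ ∏ n ∈ range j, damping L η n x :=
    prod_nonneg fun n _ => damping_nonneg L η hx.2.le n
  have hexp : Real.exp (-4) = Real.exp (-2) * Real.exp (-1) ^ 2 := by
    rw [← Real.exp_nat_mul, ← Real.exp_add]
    norm_num
  calc 1 / 4 * Real.exp (-4) * ((∑ n ∈ range h, L n) * D ^ 2)
      = ∑ n ∈ range h, 1 / 2 * Real.exp (-2) * (1 / 2 * (L n * (Real.exp (-1) * D) ^ 2)) := by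
        rw [hexp, ← mul_sum, ← mul_sum, ← sum_mul]
        ring
    _ ≤ ∑ j ∈ range h, (∏ n ∈ range j, damping L η n x) * derivSource L η j x := by
        refine sum_le_sum fun j hj => ?_
        have hjh := mem_range.1 hj
        have := hL j
        exact mul_le_mul (hη.le_prod_damping hL hx hF hkx (hjh.le.trans hhk))
          (hη.le_derivSource hL hx hsum hF hjh hhk) (by positivity) (hprod_nonneg j)
    _ ≤ ∑ j ∈ range k, (∏ n ∈ range j, damping L η n x) * derivSource L η j x :=
        sum_le_sum_of_subset_of_nonneg (range_mono hhk)
          fun j _ _ => mul_nonneg (hprod_nonneg j) (hη.derivSource_nonneg hL hx j)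
    _ ≤ -η' 0 x := by
        rw [hη.neg_deriv_zero_eq hL hx k]
        exact le_add_of_nonneg_right
          (mul_nonneg (hprod_nonneg k) (neg_nonneg.2 (hη.deriv_nonpos k x hx)))

end Pointwise

lemma exists_mul_crossoverSum_eq_one (hη : IsReturnFamily L η η') (hL : ∀ n, 0 < L n)
    (hsum : Summable fun n => 1 / L n) (hhk : h ≤ k)
    (hlarge : 2 < Real.exp (-1) * ((∑ n ∈ range h, L n) * (resistance L h - resistance L k))) :
    ∃ x ∈ Set.Ioo (0 : ℝ) 1, x * crossoverSum L η k x = 1 := by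
  have hhalf : (1 / 2 : ℝ) ∈ Set.Ioo (0 : ℝ) 1 := by norm_num
  have hright : 1 ≤ 1 / 2 * crossoverSum L η k (1 / 2) := by
    by_contra! hlt
    linarith [hη.le_crossoverSum hL hhalf hsum hlt.le hhk]
  obtain ⟨y, hy_le, hy⟩ : ∃ y, y * ∑ n ∈ range k, L n * resistance L n ≤ 1 ∧
      y ∈ Set.Ioo (0 : ℝ) (1 / 2) := by
    have hlim : Tendsto (fun y => y * ∑ n ∈ range k, L n * resistance L n) (𝓝[>] 0) (𝓝 0) :=
      ((continuous_mul_const _).tendsto' 0 0 (zero_mul _)).mono_left nhdsWithin_le_nhds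
    exact ((hlim.eventually_le_const one_pos).and (Ioo_mem_nhdsGT hhalf.1)).exists
  have hleft : y * crossoverSum L η k y ≤ 1 := by
    have hle := hη.crossoverSum_le hL ⟨hy.1, hy.2.trans hhalf.2⟩ hsum k
    exact (mul_le_mul_of_nonneg_left hle hy.1.le).trans hy_le
  have hIcc : Set.Icc y (1 / 2) ⊆ Set.Ioo 0 1 := Set.Icc_subset_Ioo hy.1 hhalf.2
  have hcont : ContinuousOn (fun t => t * crossoverSum L η k t) (Set.Icc y (1 / 2)) := by
    refine continuousOn_id.mul (continuousOn_finsetSum _ fun n _ => continuousOn_const.mul ?_)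
    exact fun t ht => (hη.hasDerivAt (n + 1) t (hIcc ht)).continuousAt.continuousWithinAt
  obtain ⟨x, hx, hFx⟩ := intermediate_value_Icc hy.2.le hcont ⟨hleft, hright⟩
  exact ⟨x, hIcc hx, hFx⟩

section DyadicScales

variable (hη : IsReturnFamily L η η') (hL : ∀ n, 0 < L n) (hsum : Summable fun n => 1 / L n)
  {d a : ℝ} (hB : HasExponent atTop (Nat.cast : ℕ → ℝ) (fun N => ∑ n ∈ range N, L n) d)
  (hR : HasExponent atTop (Nat.cast : ℕ → ℝ) (resistance L) a) {l : Filter ℕ} (hl : l ≤ atTop)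
  (hdrop : HasExponent l (fun i : ℕ => (2 : ℝ) ^ i)
    (fun i => resistance L (2 ^ i) - resistance L (2 ^ (i + 1))) a)

include hη hL hsum hB hl hdrop

lemma exists_crossover [l.NeBot] (hda : 0 < d + a) :
    ∃ x : ℕ → ℝ, ∀ᶠ i in l, x i ∈ Set.Ioo (0 : ℝ) 1 ∧
      x i * crossoverSum L η (2 ^ (i + 1)) (x i) = 1 := by
  have ht := tendsto_two_pow_atTop.mono_left hl
  have hlarge := ((((hB.comp_two_pow 0).mono hl).mul hdrop).const_mul ht
    (Real.exp_pos (-1))).tendsto_atTop ht hda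
  exact ((hlarge.eventually_gt_atTop 2).mono fun i hi =>
    hη.exists_mul_crossoverSum_eq_one hL hsum (Nat.pow_le_pow_right two_pos i.le_succ) hi).choice

include hR

variable {x : ℕ → ℝ} (hx : ∀ᶠ i in l, x i ∈ Set.Ioo (0 : ℝ) 1 ∧
  x i * crossoverSum L η (2 ^ (i + 1)) (x i) = 1)

include hx

lemma hasExponent_one_div_crossover (hda : 0 ≤ d + a) :
    HasExponent l (fun i : ℕ => (2 : ℝ) ^ i) (fun i => 1 / x i) (d + a) := by
  have ht := tendsto_two_pow_atTop.mono_left hl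
  have hupper := (hasExponent_sum_range_two_pow_mul (fun n => (hL n).le)
    (antitone_resistance hL hsum) (resistance_nonneg hL) hB hR hda).comp_succ
  refine ((((hB.comp_two_pow 0).mono hl).mul hdrop).const_mul ht (Real.exp_pos (-1))).squeeze
    (hupper.mono hl) ht ?_ ?_
  all_goals
    filter_upwards [hx] with i ⟨hxi, hF⟩
    rw [← eq_one_div_of_mul_eq_one_right hF]
  · exact hη.le_crossoverSum hL hxi hsum hF.le (Nat.pow_le_pow_right two_pos i.le_succ)
  · exact hη.crossoverSum_le hL hxi hsum _

lemma hasExponent_abs_deriv_crossover (hda : 1 < d + a) (hda' : 0 ≤ d + 2 * a) :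
    HasExponent l (fun i : ℕ => (2 : ℝ) ^ i) (fun i => |η' 0 (x i)|) (d + 2 * a) := by
  have ht := tendsto_two_pow_atTop.mono_left hl
  have hsmall : ∀ᶠ i in l, ((2 ^ (i + 1) : ℕ) : ℝ) * x i ≤ 1 / 2 := by
    have hratio := ((hη.hasExponent_one_div_crossover hL hsum hB hR hl hdrop hx
      (one_pos.trans hda).le).div (.self ht)).tendsto_atTop ht (sub_pos.2 hda)
    filter_upwards [hratio.eventually_ge_atTop 4, hx] with i hi ⟨hxi, _⟩
    rw [le_div_iff₀ (by positivity), le_div_iff₀ hxi.1] at hi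
    push_cast
    rw [pow_succ]
    linarith
  have hlower := (((hB.comp_two_pow 0).mono hl).mul (hdrop.rpow 2)).const_mul ht
    (by positivity : 0 < 1 / 4 * Real.exp (-4))
  have hupper := (((hasExponent_sum_range_two_pow_mul (fun n => (hL n).le)
    (fun m n hmn => Real.rpow_le_rpow (resistance_nonneg hL n) (antitone_resistance hL hsum hmn)
      zero_le_two) (fun n => Real.rpow_nonneg (resistance_nonneg hL n) 2) hB (hR.rpow 2)
    hda').comp_succ).const_mul tendsto_two_pow_atTop three_pos).mono hl
  simp only [Real.rpow_two, add_zero] at hlower hupper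
  refine hlower.squeeze hupper ht ?_ ?_
  · filter_upwards [hx, hsmall] with i ⟨hxi, hF⟩ hi
    rw [abs_of_nonpos (hη.deriv_nonpos 0 _ hxi)]
    exact hη.le_neg_deriv_zero hL hxi hsum hF.le hi (Nat.pow_le_pow_right two_pos i.le_succ)
  · filter_upwards [hx] with i ⟨hxi, hF⟩
    rw [abs_of_nonpos (hη.deriv_nonpos 0 _ hxi)]
    exact hη.neg_deriv_zero_le hL hxi hsum hF

end DyadicScales

end IsReturnFamily

theorem stmt_18_general (L : ℕ → ℝ) (hL : ∀ n, 0 < L n) (hsum : Summable fun n => 1 / L n)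
    (dH ρ : ℝ) (hdH : dH ≤ 2 * (2 + ρ))
    (hB : NAsymp (fun N => ∑ n ∈ range (N + 1), L n) dH)
    (hR : NAsymp (resistance L) (2 - dH + ρ))
    (η η' : ℕ → ℝ → ℝ) (hη : IsReturnFamily L η η')
    (ds : ℝ) (hds : ZeroAsymp (fun x => |η' 0 x|) (-2 + ds / 2)) :
    ds = 2 * dH / (2 + ρ) := by
  have hB : HasExponent atTop (Nat.cast : ℕ → ℝ) (fun N => ∑ n ∈ range N, L n) dH :=
    .of_comp_succ hB.hasExponent
  have hR := hR.hasExponent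
  have hσ := two_le_volume_exponent_add_resistance_exponent hL hsum hB hR
  have hr := hR.comp_two_pow 0
  obtain ⟨l, hl, hl_neBot, hdrop⟩ := exists_hasExponent_sub_succ
    (fun i => resistance_pos hL hsum (2 ^ i))
    ((tendsto_resistance_atTop L).comp (tendsto_pow_atTop_atTop_of_one_lt one_lt_two))
    hr hr.comp_succ
  have ht := tendsto_two_pow_atTop.mono_left hl
  obtain ⟨x, hx⟩ := hη.exists_crossover hL hsum hB hl hdrop (by linarith)
  have hx_inv := hη.hasExponent_one_div_crossover hL hsum hB hR hl hdrop hx (by linarith)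
  have hη'_x := hη.hasExponent_abs_deriv_crossover hL hsum hB hR hl hdrop hx (by linarith)
    (by linarith)
  have hx_zero : Tendsto x l (𝓝[>] 0) :=
    (tendsto_inv_atTop_nhdsGT_zero.comp (hx_inv.tendsto_atTop ht (by linarith))).congr
      fun i => by rw [Function.comp_apply, one_div, inv_inv]
  have hexponents := (hds.hasExponent.comp tendsto_one_div_nhdsGT_zero hx_zero hx_inv).unique hη'_x
  rw [eq_div_iff (by linarith)]
  linarith

/-- Theorem 10, the paper's main result in the transient case: for a multigraph with
volume doubling, Hausdorff dimension `2 ≤ d_H < 4`, resistance exponent `ρ`, the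
universal bounds, the recursion, `η_n` nonincreasing convex with `η_n(0+) = R_n`,
and existence of the crossover scales `x_k`, if the spectral dimension `d_s` exists
(`|η_0'(x)| ∼ x^{-2+d_s/2}`) then `d_s = 2 d_H/(2+ρ)`. -/
theorem stmt_18 (L : ℕ → ℝ) (hL : ∀ n : ℕ, 1 ≤ L n)
    (hsum : Summable (fun n : ℕ => 1 / L n))
    (R : ℕ → ℝ) (hR : ∀ N : ℕ, R N = ∑' n : ℕ, 1 / L (N + n))
    (c : ℝ) (hc : 1 < c) (N₀ : ℕ)
    (hdbl : ∀ N : ℕ, N₀ < N →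
      (∑ n ∈ Finset.range (2*N+1), L n) ≤ c * ∑ n ∈ Finset.range (N+1), L n)
    (dH ρ : ℝ) (hdH2 : 2 ≤ dH) (hdH4 : dH < 4)
    (hB : NAsymp (fun N => ∑ n ∈ Finset.range (N+1), L n) dH)
    (hRas : NAsymp R (2 - dH + ρ))
    (η η' : ℕ → ℝ → ℝ)
    (hpos : ∀ (n : ℕ), ∀ x ∈ Set.Ioo (0:ℝ) 1, 0 < η n x)
    (hderiv : ∀ (n : ℕ), ∀ x ∈ Set.Ioo (0:ℝ) 1, HasDerivAt (η n) (η' n x) x)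
    (hmono : ∀ (n : ℕ), ∀ x ∈ Set.Ioo (0:ℝ) 1, η' n x ≤ 0)
    (hconv : ∀ n : ℕ, ConvexOn ℝ (Set.Ioo (0:ℝ) 1) (η n))
    (hlim : ∀ n : ℕ, Filter.Tendsto (η n) (nhdsWithin 0 (Set.Ioi 0)) (nhds (R n)))
    (hbnd : ∀ (n : ℕ), ∀ x ∈ Set.Ioo (0:ℝ) 1,
      1 / L n ≤ η n x ∧ η n x ≤ x ^ (-(1:ℝ)/2))
    (hrec : ∀ (n : ℕ), ∀ x ∈ Set.Ioo (0:ℝ) 1,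
      η n x = (η (n+1) x + 1 / L n) / (1 + x * L n * η (n+1) x))
    (xs : ℕ → ℝ) (K : ℕ)
    (hxs : ∀ k : ℕ, K ≤ k → xs k ∈ Set.Ioo (0:ℝ) 1 ∧
      xs k * ∑ j ∈ Finset.range k, L j * η (j+1) (xs k) = 1)
    (hxs0 : Filter.Tendsto xs Filter.atTop (nhds 0))
    (ds : ℝ) (hds : ZeroAsymp (fun x => |η' 0 x|) (-2 + ds/2)) :
    ds = 2 * dH / (2 + ρ) := by
  have hL_pos (n : ℕ) : 0 < L n := one_pos.trans_le (hL n)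
  obtain rfl : R = resistance L := funext hR
  have hσ := two_le_volume_exponent_add_resistance_exponent hL_pos hsum
    (.of_comp_succ hB.hasExponent) hRas.hasExponent
  exact stmt_18_general L hL_pos hsum dH ρ (by linarith) hB hRas η η'
    ⟨hpos, hderiv, hmono, hconv, hlim, hrec⟩ ds hds
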